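/- arXiv:1902.05741 — 12 statements merged into one kernel-verified Lean document; each statement's English description precedes it below -/
import Mathlib

section
/- Let ℓ be a nonnegative integer with ℓ ≠ 0 and ℓ ≠ 1. If p : ℤ → ℂ satisfies (nℓ + m + n)·p(m) − (mℓ + m + n)·p(n) − (m − n)·p(m + n) = 0 for all m, n ∈ ℤ, then p(n) = n·p(1) for all n ∈ ℤ (so every such central extension is trivial, being absorbed by a redefinition of the generator P₀). -/
/-- For a nonnegative integer `ℓ` with `ℓ ≠ 0` and `ℓ ≠ 1`, any solution
`p : ℤ → ℂ` of the recurrence `(nℓ + m + n)p(m) − (mℓ + m + n)p(n) − (m − n)p(m + n) = 0`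
satisfies `p(n) = n·p(1)`, i.e. the central extension is trivial. -/
theorem central_extension_p_trivial (ℓ : ℕ) (hℓ0 : ℓ ≠ 0) (hℓ1 : ℓ ≠ 1)
    (p : ℤ → ℂ)
    (hrec : ∀ m n : ℤ,
      ((n : ℂ) * (ℓ : ℂ) + (m : ℂ) + (n : ℂ)) * p m
      - ((m : ℂ) * (ℓ : ℂ) + (m : ℂ) + (n : ℂ)) * p n
      - ((m : ℂ) - (n : ℂ)) * p (m + n) = 0) :
    ∀ n : ℤ, p n = (n : ℂ) * p 1 := by
  have l0 : (ℓ : ℂ) ≠ 0 := by exact_mod_cast hℓ0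
  have l1 : (ℓ : ℂ) - 1 ≠ 0 := sub_ne_zero.mpr (by exact_mod_cast hℓ1)
  have l2 : (ℓ : ℂ) + 1 ≠ 0 := by exact_mod_cast Nat.succ_ne_zero ℓ
  have p0 : p 0 = 0 := by
    have h := hrec 1 0
    norm_num at h
    exact h.resolve_left l2
  have odd : ∀ m : ℤ, p (-m) = - p m := by
    intro m
    by_cases hm : m = 0
    · simp [hm, p0]
    have hm' : (m : ℂ) ≠ 0 := by exact_mod_cast hm
    have h := hrec m (-m)
    rw [add_neg_cancel, p0] at h
    push_cast at h
    have : ((m : ℂ) * ℓ) * (p (-m) + p m) = 0 := by linear_combination -h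
    have := (mul_eq_zero.mp this).resolve_left (mul_ne_zero hm' l0)
    linear_combination this
  have p2 : p 2 = 2 * p 1 := by
    have h := hrec (-2) 1
    rw [show (-2 + 1 : ℤ) = -1 by norm_num, odd 2, odd 1] at h
    push_cast at h
    have : ((ℓ : ℂ) - 1) * (p 2 - 2 * p 1) = 0 := by linear_combination -h
    have := (mul_eq_zero.mp this).resolve_left l1
    linear_combination this
  have pos : ∀ k : ℕ, p ((k : ℤ) + 2) = ((k : ℂ) + 2) * p 1 := by
    intro k
    induction k with
    | zero => simpa using p2
    | succ k ih =>
      have h := hrec ((k : ℤ) + 2) 1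
      rw [ih, show (k : ℤ) + 2 + 1 = ((k + 1 : ℕ) : ℤ) + 2 by push_cast; ring] at h
      push_cast at h ⊢
      have hk : (k : ℂ) + 1 ≠ 0 := by exact_mod_cast Nat.succ_ne_zero k
      apply mul_left_cancel₀ hk
      linear_combination -h
  have nat : ∀ k : ℕ, p (k : ℤ) = (k : ℂ) * p 1 := by
    intro k
    match k with
    | 0 => simpa using p0
    | 1 => simp
    | k + 2 => simpa using pos k
  intro n
  obtain ⟨k, rfl | rfl⟩ := n.eq_nat_or_neg
  · simpa using nat k
  · rw [odd, nat]
    push_cast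
    ring
end

section
/- Let ℓ = 0. If p : ℤ → ℂ satisfies (m + n)·p(m) − (m + n)·p(n) − (m − n)·p(m + n) = 0 for all m, n ∈ ℤ, then p(n) = ½·n²·(p(1) + p(−1)) + ½·n·(p(1) − p(−1)) for all n ∈ ℤ. -/
/-- For `ℓ = 0`, any solution `p : ℤ → ℂ` of the recurrence
`(m + n)p(m) − (m + n)p(n) − (m − n)p(m + n) = 0` satisfies
`p(n) = ½n²(p(1) + p(−1)) + ½n(p(1) − p(−1))`. -/
theorem central_extension_p_ell_zero (p : ℤ → ℂ)
    (hrec : ∀ m n : ℤ,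
      ((m : ℂ) + (n : ℂ)) * p m - ((m : ℂ) + (n : ℂ)) * p n
      - ((m : ℂ) - (n : ℂ)) * p (m + n) = 0) :
    ∀ n : ℤ, p n = (1 / 2) * (n : ℂ) ^ 2 * (p 1 + p (-1))
      + (1 / 2) * (n : ℂ) * (p 1 - p (-1)) := by
  have h0 : p 0 = 0 := by
    have h := hrec 1 (-1)
    norm_num at h
    exact h
  have h2 : p 2 = 3 * p 1 + p (-1) := by
    have h := hrec 2 (-1)
    norm_num at h
    linear_combination h
  have h2' : p (-2) = 3 * p (-1) + p 1 := by
    have h := hrec (-2) 1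
    norm_num at h
    linear_combination -h
  have pos : ∀ k : ℕ, p ((k : ℤ) + 2) = (1 / 2) * ((k : ℂ) + 2) ^ 2 * (p 1 + p (-1))
      + (1 / 2) * ((k : ℂ) + 2) * (p 1 - p (-1)) := by
    intro k
    induction k with
    | zero => norm_num [h2]; ring
    | succ k ih =>
      have h := hrec ((k : ℤ) + 2) 1
      have e : ((k + 1 : ℕ) : ℤ) + 2 = (k : ℤ) + 2 + 1 := by push_cast; ring
      rw [e]
      rw [ih] at h
      have hk : (k : ℂ) + 1 ≠ 0 := Nat.cast_add_one_ne_zero k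
      apply mul_left_cancel₀ hk
      push_cast at h ⊢
      linear_combination -h
  have neg : ∀ k : ℕ, p (-(k : ℤ) - 2) = (1 / 2) * ((k : ℂ) + 2) ^ 2 * (p 1 + p (-1))
      - (1 / 2) * ((k : ℂ) + 2) * (p 1 - p (-1)) := by
    intro k
    induction k with
    | zero => norm_num [h2']; ring
    | succ k ih =>
      have h := hrec (-(k : ℤ) - 2) (-1)
      have e : -((k + 1 : ℕ) : ℤ) - 2 = -(k : ℤ) - 2 + -1 := by push_cast; ring
      rw [e]
      rw [ih] at h
      have hk : (k : ℂ) + 1 ≠ 0 := Nat.cast_add_one_ne_zero k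
      apply mul_left_cancel₀ hk
      push_cast at h ⊢
      linear_combination h
  intro n
  have hc : n = 0 ∨ n = 1 ∨ n = -1 ∨ 2 ≤ n ∨ n ≤ -2 := by omega
  rcases hc with rfl | rfl | rfl | h | h
  · simp [h0]
  · push_cast; ring
  · push_cast; ring
  · obtain ⟨k, hk⟩ := Int.eq_ofNat_of_zero_le (show 0 ≤ n - 2 by omega)
    obtain rfl : n = (k : ℤ) + 2 := by omega
    rw [pos k]; push_cast; ring
  · obtain ⟨k, hk⟩ := Int.eq_ofNat_of_zero_le (show 0 ≤ -n - 2 by omega)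
    obtain rfl : n = -(k : ℤ) - 2 := by omega
    rw [neg k]; push_cast; ring
end

section
/- Fix a nonnegative integer ℓ₁ and a nonnegative half-integer ℓ₂. If ζ : (ℤ+ℓ₂)×(ℤ+ℓ₂) → ℂ is antisymmetric (ζ(u,v) = −ζ(v,u)) and satisfies relation (R), then ζ(u, ℓ₂) = 0 for every u ∈ ℤ+ℓ₂ with −ℓ₁−ℓ₂ ≤ u ≤ ℓ₂. -/
/-- Let `ℓ₁` be a nonnegative integer and `ℓ₂` a nonnegative half-integer.
If `ζ : (ℤ+ℓ₂)×(ℤ+ℓ₂) → ℂ` is antisymmetric and satisfies relation (R):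
`(mℓ₂ − u)ζ(m+u, v) + (mℓ₂ − v)ζ(u, m+v) + (mℓ₁ + m + u + v)ζ(u, v) = 0`,
then `ζ(u, ℓ₂) = 0` for every `u ∈ ℤ+ℓ₂` with `−ℓ₁−ℓ₂ ≤ u ≤ ℓ₂`. -/
theorem zeta_antisym_vanishes_in_range (ℓ₁ : ℕ) (ℓ₂ : ℚ)
    (hhalf : ∃ k : ℕ, 2 * ℓ₂ = (k : ℚ))
    (ζ : ℚ → ℚ → ℂ)
    (hanti : ∀ u v : ℚ, (∃ n : ℤ, u = (n : ℚ) + ℓ₂) → (∃ n : ℤ, v = (n : ℚ) + ℓ₂) →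
      ζ u v = - ζ v u)
    (hR : ∀ (m : ℤ) (u v : ℚ), (∃ n : ℤ, u = (n : ℚ) + ℓ₂) → (∃ n : ℤ, v = (n : ℚ) + ℓ₂) →
      ((m : ℂ) * (ℓ₂ : ℂ) - (u : ℂ)) * ζ ((m : ℚ) + u) v
      + ((m : ℂ) * (ℓ₂ : ℂ) - (v : ℂ)) * ζ u ((m : ℚ) + v)
      + ((m : ℂ) * (ℓ₁ : ℂ) + (m : ℂ) + (u : ℂ) + (v : ℂ)) * ζ u v = 0) :
    ∀ u : ℚ, (∃ n : ℤ, u = (n : ℚ) + ℓ₂) → -(ℓ₁ : ℚ) - ℓ₂ ≤ u → u ≤ ℓ₂ →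
      ζ u ℓ₂ = 0 := by
  have hb : ∃ n : ℤ, ℓ₂ = (n : ℚ) + ℓ₂ := ⟨0, by simp⟩
  have key : ∀ k : ℕ, -(ℓ₁ : ℚ) - ℓ₂ ≤ -(k : ℚ) + ℓ₂ → ζ (-(k : ℚ) + ℓ₂) ℓ₂ = 0 := by
    intro k
    induction k with
    | zero =>
      intro _
      have h := hanti ℓ₂ ℓ₂ hb hb
      have h2 : ζ ℓ₂ ℓ₂ = 0 := self_eq_neg.mp h
      simpa using h2
    | succ k ih =>
      intro hk
      push_cast at hk
      have ih' := ih (by linarith)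
      have h := hR 1 (-((k + 1 : ℕ) : ℚ) + ℓ₂) ℓ₂ ⟨-((k + 1 : ℕ) : ℤ), by push_cast; ring⟩ hb
      have e : ((1 : ℤ) : ℚ) + (-((k + 1 : ℕ) : ℚ) + ℓ₂) = -(k : ℚ) + ℓ₂ := by
        push_cast; ring
      rw [e, ih'] at h
      have hne : (((ℓ₁ : ℚ) + 1 + (-((k + 1 : ℕ) : ℚ) + ℓ₂) + ℓ₂ : ℚ) : ℂ) ≠ 0 := by
        rw [Ne, Rat.cast_eq_zero]
        push_cast
        intro h0
        linarith
      refine (mul_eq_zero.mp ?_).resolve_left hne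
      rw [← h]
      push_cast
      ring
  rintro u ⟨n, rfl⟩ h1 h2
  have hn : n ≤ 0 := by
    have : (n : ℚ) ≤ 0 := by linarith
    exact_mod_cast this
  obtain ⟨k, hk⟩ := Int.exists_eq_neg_ofNat hn
  subst hk
  have e : ((-(k : ℤ) : ℤ) : ℚ) = -(k : ℚ) := by push_cast; ring
  rw [e] at h1 ⊢
  exact key k h1
end

section
/- Fix a nonnegative integer ℓ₁ and a nonnegative half-integer ℓ₂, and set ℓ̄ = ℓ₁ + 2ℓ₂. If ζ : (ℤ+ℓ₂)×(ℤ+ℓ₂) → ℂ is antisymmetric and satisfies relation (R), then for every u ∈ ℤ+ℓ₂ with u ≥ ℓ₂+1 one has ζ(u, ℓ₂) = [(u+ℓ₁+ℓ₂)! / ((ℓ̄+1)!·(u−ℓ₂−1)!)]·ζ(ℓ₂+1, ℓ₂), and for every u ∈ ℤ−ℓ₂ with u ≥ ℓ₁+ℓ₂+1 one has ζ(−u, ℓ₂) = [(u+ℓ₂)! / ((ℓ̄+1)!·(u−ℓ₁−ℓ₂−1)!)]·ζ(−ℓ₁−ℓ₂−1, ℓ₂). (All factorial arguments are nonnegative integers.)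 -/
lemma fact_rec_aux (B : ℕ) (f : ℕ → ℂ)
    (h : ∀ n : ℕ, ((n : ℂ) + 1) * f (n + 1) = ((B : ℂ) + n + 1) * f n) (n : ℕ) :
    f n = ((Nat.factorial (B + n) : ℂ) / ((Nat.factorial B : ℂ) * (Nat.factorial n : ℂ))) * f 0 := by
  have hB : (Nat.factorial B : ℂ) ≠ 0 := by exact_mod_cast Nat.factorial_ne_zero B
  induction n with
  | zero => simp [hB]
  | succ n ih =>
    have hn : (Nat.factorial n : ℂ) ≠ 0 := by exact_mod_cast Nat.factorial_ne_zero n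
    have hn1 : (n : ℂ) + 1 ≠ 0 := by exact_mod_cast Nat.succ_ne_zero n
    apply mul_left_cancel₀ hn1
    rw [h n, ih, ← add_assoc, Nat.factorial_succ, Nat.factorial_succ]
    push_cast
    field_simp

/-- Let `ℓ₁` be a nonnegative integer, `ℓ₂` a nonnegative half-integer,
`ℓ̄ = ℓ₁ + 2ℓ₂`. If `ζ` is antisymmetric on `(ℤ+ℓ₂)×(ℤ+ℓ₂)` and satisfies relation (R),
then for `u ∈ ℤ+ℓ₂` with `u ≥ ℓ₂+1`:
`ζ(u, ℓ₂) = (u+ℓ₁+ℓ₂)! / ((ℓ̄+1)!(u−ℓ₂−1)!) · ζ(ℓ₂+1, ℓ₂)`,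
and for `u ∈ ℤ−ℓ₂` with `u ≥ ℓ₁+ℓ₂+1`:
`ζ(−u, ℓ₂) = (u+ℓ₂)! / ((ℓ̄+1)!(u−ℓ₁−ℓ₂−1)!) · ζ(−ℓ₁−ℓ₂−1, ℓ₂)`.
The factorial arguments, being nonnegative integers, are represented by naturals
`A`, `B`, `C` equal (as rationals) to the indicated quantities. -/
theorem zeta_antisym_factorial_formula (ℓ₁ : ℕ) (ℓ₂ : ℚ)
    (hhalf : ∃ k : ℕ, 2 * ℓ₂ = (k : ℚ))
    (ζ : ℚ → ℚ → ℂ)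
    (hanti : ∀ u v : ℚ, (∃ n : ℤ, u = (n : ℚ) + ℓ₂) → (∃ n : ℤ, v = (n : ℚ) + ℓ₂) →
      ζ u v = - ζ v u)
    (hR : ∀ (m : ℤ) (u v : ℚ), (∃ n : ℤ, u = (n : ℚ) + ℓ₂) → (∃ n : ℤ, v = (n : ℚ) + ℓ₂) →
      ((m : ℂ) * (ℓ₂ : ℂ) - (u : ℂ)) * ζ ((m : ℚ) + u) v
      + ((m : ℂ) * (ℓ₂ : ℂ) - (v : ℂ)) * ζ u ((m : ℚ) + v)
      + ((m : ℂ) * (ℓ₁ : ℂ) + (m : ℂ) + (u : ℂ) + (v : ℂ)) * ζ u v = 0) :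
    (∀ u : ℚ, (∃ n : ℤ, u = (n : ℚ) + ℓ₂) → ℓ₂ + 1 ≤ u →
      ∀ A B C : ℕ, (A : ℚ) = u + (ℓ₁ : ℚ) + ℓ₂ → (B : ℚ) = ((ℓ₁ : ℚ) + 2 * ℓ₂) + 1 →
        (C : ℚ) = u - ℓ₂ - 1 →
        ζ u ℓ₂ = ((Nat.factorial A : ℂ) / ((Nat.factorial B : ℂ) * (Nat.factorial C : ℂ)))
          * ζ (ℓ₂ + 1) ℓ₂)
    ∧ (∀ u : ℚ, (∃ n : ℤ, u = (n : ℚ) - ℓ₂) → (ℓ₁ : ℚ) + ℓ₂ + 1 ≤ u →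
      ∀ A B C : ℕ, (A : ℚ) = u + ℓ₂ → (B : ℚ) = ((ℓ₁ : ℚ) + 2 * ℓ₂) + 1 →
        (C : ℚ) = u - (ℓ₁ : ℚ) - ℓ₂ - 1 →
        ζ (-u) ℓ₂ = ((Nat.factorial A : ℂ) / ((Nat.factorial B : ℂ) * (Nat.factorial C : ℂ)))
          * ζ (-(ℓ₁ : ℚ) - ℓ₂ - 1) ℓ₂) := by
  obtain ⟨k, hk⟩ := hhalf
  constructor
  · intro u _ _ A B C hA hB hC
    have hAB : A = B + C := by
      have : (A : ℚ) = B + C := by rw [hA, hB, hC]; ring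
      exact_mod_cast this
    have hBc : (B : ℂ) = (ℓ₁ : ℂ) + 2 * (ℓ₂ : ℂ) + 1 := by
      have := congrArg (fun q : ℚ => (q : ℂ)) hB
      push_cast at this
      exact this
    have key := fact_rec_aux B (fun n => ζ (ℓ₂ + 1 + n) ℓ₂) (by
      intro n
      have h := hR 1 (ℓ₂ + 1 + n) ℓ₂ ⟨n + 1, by push_cast; ring⟩ ⟨0, by simp⟩
      have e : ((1 : ℤ) : ℚ) + (ℓ₂ + 1 + n) = ℓ₂ + 1 + ((n + 1 : ℕ) : ℚ) := by push_cast; ring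
      rw [e] at h
      push_cast at h ⊢
      rw [hBc]
      linear_combination -h) C
    have eu : u = ℓ₂ + 1 + C := by rw [hC]; ring
    rw [hAB, eu]
    simpa using key
  · intro u _ _ A B C hA hB hC
    have hAB : A = B + C := by
      have : (A : ℚ) = B + C := by rw [hA, hB, hC]; ring
      exact_mod_cast this
    have hBc : (B : ℂ) = (ℓ₁ : ℂ) + 2 * (ℓ₂ : ℂ) + 1 := by
      have := congrArg (fun q : ℚ => (q : ℂ)) hB
      push_cast at this
      exact this
    have key := fact_rec_aux B (fun n => ζ (-(ℓ₁ : ℚ) - ℓ₂ - 1 - n) ℓ₂) (by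
      intro n
      have h := hR 1 (-(ℓ₁ : ℚ) - ℓ₂ - 1 - ((n + 1 : ℕ) : ℚ)) ℓ₂
        ⟨-(ℓ₁ : ℤ) - 1 - (n + 1) - k, by push_cast; rw [← hk]; ring⟩ ⟨0, by simp⟩
      have e : ((1 : ℤ) : ℚ) + (-(ℓ₁ : ℚ) - ℓ₂ - 1 - ((n + 1 : ℕ) : ℚ))
          = -(ℓ₁ : ℚ) - ℓ₂ - 1 - n := by push_cast; ring
      rw [e] at h
      push_cast at h ⊢
      rw [hBc]
      linear_combination -h) C
    have eu : -u = -(ℓ₁ : ℚ) - ℓ₂ - 1 - C := by rw [hC]; ring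
    rw [hAB, eu]
    simpa using key
end

section
/- Let ℓ₁ = 0 and ℓ₂ = 1/2. If ζ : (ℤ+1/2)×(ℤ+1/2) → ℂ is antisymmetric and satisfies relation (R), then ζ(u, v) = ½·(u² − v²)·ζ(3/2, 1/2) for all u, v ∈ ℤ+1/2. -/
theorem zeta_aux (g : ℤ → ℤ → ℂ) (ha : ∀ n k, g n k = - g k n)
    (h1 : g 1 0 = 0)
    (hR : ∀ m n k : ℤ, ((m - 2 * n - 1 : ℤ) : ℂ) * g (m + n) k
      + ((m - 2 * k - 1 : ℤ) : ℂ) * g n (m + k) + ((2 * (m + n + k + 1) : ℤ) : ℂ) * g n k = 0) :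
    ∀ n k, g n k = 0 := by
  have hd : ∀ n, g n n = 0 := fun n => by
    have := ha n n
    linear_combination (1 / 2) * this
  have h01 : g 0 1 = 0 := by rw [ha, h1, neg_zero]
  have hpos : ∀ j : ℕ, g 0 ((j : ℤ) + 1) = 0 := by
    intro j
    induction j with
    | zero => simpa using h01
    | succ j ih =>
      have h := hR 1 0 ((j : ℤ) + 1)
      rw [ih] at h
      have hz : ((1 - 2 * 0 - 1 : ℤ) : ℂ) = 0 := by norm_num
      rw [hz, zero_mul, zero_add, mul_zero, add_zero] at h
      rcases mul_eq_zero.1 h with h | h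
      · have h' : (1 - 2 * ((j : ℤ) + 1) - 1 : ℤ) = 0 := by exact_mod_cast h
        omega
      · rw [← h]; congr 1; push_cast; ring
  have hm1 : g 0 (-1) = 0 := by
    have h := hR 1 0 (-1)
    norm_num [hd] at h
    exact h
  have hm2 : g 0 (-2) = 0 := by
    have e1 := hR (-2) 0 1
    have e2 := hR (-2) 0 2
    have e3 := hR 2 0 (-2)
    have h2 := hpos 1
    norm_num at h2
    norm_num [hd, h01, h2, hm1] at e1 e2 e3
    have := ha 2 (-2)
    rw [e2] at this
    simpa [this] using e3
  have hneg : ∀ j : ℕ, g 0 (-(j : ℤ) - 2) = 0 := by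
    intro j
    induction j with
    | zero => simpa using hm2
    | succ j ih =>
      have h := hR 1 0 (-(j : ℤ) - 3)
      have e : (1 + (-(j : ℤ) - 3)) = -(j : ℤ) - 2 := by ring
      rw [e, ih] at h
      have hz : ((1 - 2 * 0 - 1 : ℤ) : ℂ) = 0 := by norm_num
      rw [hz, zero_mul, zero_add, mul_zero, zero_add] at h
      rcases mul_eq_zero.1 h with h | h
      · have h' : (2 * (1 + 0 + (-(j : ℤ) - 3) + 1) : ℤ) = 0 := by exact_mod_cast h
        omega
      · rw [← h]; congr 1; push_cast; ring
  have hf : ∀ k, g 0 k = 0 := by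
    intro k
    rcases lt_trichotomy k 0 with hk | hk | hk
    · by_cases h : k = -1
      · rw [h, hm1]
      · have := hneg (-k - 2).toNat
        rwa [show (-((-k - 2).toNat : ℤ) - 2) = k by omega] at this
    · rw [hk, hd]
    · have := hpos (k - 1).toNat
      rwa [show (((k - 1).toNat : ℤ) + 1) = k by omega] at this
  have hn : ∀ n k, n ≠ 1 → g n k = 0 := by
    intro n k hn
    have h := hR n 0 k
    simp only [hf, mul_zero, add_zero] at h
    rcases mul_eq_zero.1 h with h | h
    · have h' : (n - 0 - 1 : ℤ) = 0 := by exact_mod_cast h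
      omega
    · exact h
  intro n k
  by_cases h : n = 1
  · by_cases h' : k = 1
    · rw [h, h', hd]
    · rw [ha, hn k n h', neg_zero]
  · exact hn n k h

/-- Let `ℓ₁ = 0` and `ℓ₂ = 1/2`. If `ζ : (ℤ+1/2)×(ℤ+1/2) → ℂ` is
antisymmetric and satisfies relation (R), then
`ζ(u, v) = ½(u² − v²)·ζ(3/2, 1/2)` for all half-integers `u, v`. -/
theorem zeta_antisym_ell_zero_half (ζ : ℚ → ℚ → ℂ)
    (hanti : ∀ u v : ℚ, (∃ n : ℤ, u = (n : ℚ) + 1 / 2) → (∃ n : ℤ, v = (n : ℚ) + 1 / 2) →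
      ζ u v = - ζ v u)
    (hR : ∀ (m : ℤ) (u v : ℚ),
      (∃ n : ℤ, u = (n : ℚ) + 1 / 2) → (∃ n : ℤ, v = (n : ℚ) + 1 / 2) →
      ((m : ℂ) * (1 / 2) - (u : ℂ)) * ζ ((m : ℚ) + u) v
      + ((m : ℂ) * (1 / 2) - (v : ℂ)) * ζ u ((m : ℚ) + v)
      + ((m : ℂ) + (u : ℂ) + (v : ℂ)) * ζ u v = 0) :
    ∀ u v : ℚ, (∃ n : ℤ, u = (n : ℚ) + 1 / 2) → (∃ n : ℤ, v = (n : ℚ) + 1 / 2) →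
      ζ u v = (1 / 2) * ((u : ℂ) ^ 2 - (v : ℂ) ^ 2) * ζ (3 / 2) (1 / 2) := by
  have key := zeta_aux (fun n k => ζ ((n : ℚ) + 1 / 2) ((k : ℚ) + 1 / 2)
    - (1 / 2) * (((n : ℂ) + 1 / 2) ^ 2 - ((k : ℂ) + 1 / 2) ^ 2) * ζ (3 / 2) (1 / 2)) ?_ ?_ ?_
  · rintro u v ⟨n, rfl⟩ ⟨k, rfl⟩
    have := key n k
    push_cast
    linear_combination this
  · intro n k
    have := hanti _ _ ⟨n, rfl⟩ ⟨k, rfl⟩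
    linear_combination this
  · norm_num
  · intro m n k
    have := hR m _ _ ⟨n, rfl⟩ ⟨k, rfl⟩
    push_cast at this ⊢
    rw [← add_assoc, ← add_assoc] at this
    linear_combination 2 * this
end

section
/- Let ℓ₁ = 0 and ℓ₂ = 0. If ζ : ℤ×ℤ → ℂ is antisymmetric and satisfies relation (R), i.e. −u·ζ(m+u, v) − v·ζ(u, m+v) + (m + u + v)·ζ(u, v) = 0 for all m, u, v ∈ ℤ, then ζ(u, v) = (u − v)·ζ(1, 0) for all u, v ∈ ℤ. -/
/-- Let `ℓ₁ = 0` and `ℓ₂ = 0`. If `ζ : ℤ×ℤ → ℂ` is antisymmetric and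
satisfies `−u·ζ(m+u, v) − v·ζ(u, m+v) + (m + u + v)·ζ(u, v) = 0` for all `m, u, v ∈ ℤ`,
then `ζ(u, v) = (u − v)·ζ(1, 0)` for all `u, v ∈ ℤ`. -/
theorem zeta_antisym_ell_zero_zero (ζ : ℤ → ℤ → ℂ)
    (hanti : ∀ u v : ℤ, ζ u v = - ζ v u)
    (hR : ∀ m u v : ℤ,
      -(u : ℂ) * ζ (m + u) v - (v : ℂ) * ζ u (m + v)
      + ((m : ℂ) + (u : ℂ) + (v : ℂ)) * ζ u v = 0) :
    ∀ u v : ℤ, ζ u v = ((u : ℂ) - (v : ℂ)) * ζ 1 0 := by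
  have h0 : ∀ n : ℤ, ζ n 0 = n * ζ 1 0 := by
    intro n
    have h := hR (n - 1) 1 0
    simp only [sub_add_cancel] at h
    push_cast at h
    linear_combination -h
  have h0' : ∀ n : ℤ, ζ 0 n = -(n * ζ 1 0) := by
    intro n
    rw [hanti, h0]
  have step : ∀ v : ℤ, v ≠ 0 → ζ 1 v = ζ 1 (v - 1) - ζ 1 0 := by
    intro v hv
    have h := hR (-1) 1 v
    have e : (-1 + v : ℤ) = v - 1 := by ring
    have e2 : (-1 + 1 : ℤ) = 0 := by ring
    rw [e, e2, h0'] at h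
    push_cast at h
    have hv' : (v : ℂ) ≠ 0 := by exact_mod_cast hv
    apply mul_left_cancel₀ hv'
    linear_combination h
  have hm2 : ζ 1 (-1) = ζ 1 (-2) - ζ 1 0 := by simpa using step (-1) (by norm_num)
  have hm3 : ζ 1 (-2) = ζ 1 (-3) - ζ 1 0 := by simpa using step (-2) (by norm_num)
  have hd : ζ (-1) (-1) = 0 := by
    have h := hanti (-1) (-1)
    linear_combination h / 2
  have hm1 : ζ 1 (-1) = 2 * ζ 1 0 := by
    have h := hR (-2) 1 (-1)
    norm_num at h
    rw [hd] at h
    linear_combination -h - hm2 - hm3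
  have h1 : ∀ v : ℤ, ζ 1 v = (1 - v) * ζ 1 0 := by
    intro v
    induction v using Int.induction_on with
    | zero => simp
    | succ i ih =>
      have h := step ((i : ℤ) + 1) (by omega)
      rw [add_sub_cancel_right, ih] at h
      rw [h]; push_cast; ring
    | pred i ih =>
      rcases Nat.eq_zero_or_pos i with rfl | hi
      · norm_num
        rw [hm1]
      · have h := step (-(i : ℤ)) (by omega)
        rw [ih] at h
        push_cast at h ⊢
        linear_combination -h
  intro u v
  have h := hR (u - 1) 1 v
  rw [sub_add_cancel, h1 (u - 1 + v), h1 v] at h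
  push_cast at h
  linear_combination -h
end

section
/- Fix a nonnegative integer ℓ₁ and a nonnegative half-integer ℓ₂ with ℓ₂ ≠ 0. If ζ : (ℤ+ℓ₂)×(ℤ+ℓ₂) → ℂ is symmetric and satisfies relation (R), then ζ(u, v) = 0 for all u, v ∈ ℤ+ℓ₂. -/
/-- Let `ℓ₁` be a nonnegative integer and `ℓ₂` a nonnegative half-integer
with `ℓ₂ ≠ 0`. If `ζ : (ℤ+ℓ₂)×(ℤ+ℓ₂) → ℂ` is symmetric and satisfies relation (R),
then `ζ(u, v) = 0` for all `u, v ∈ ℤ+ℓ₂`. -/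
theorem zeta_sym_vanishes_ell2_ne_zero (ℓ₁ : ℕ) (ℓ₂ : ℚ)
    (hhalf : ∃ k : ℕ, 2 * ℓ₂ = (k : ℚ))
    (hℓ₂ : ℓ₂ ≠ 0)
    (ζ : ℚ → ℚ → ℂ)
    (hsym : ∀ u v : ℚ, (∃ n : ℤ, u = (n : ℚ) + ℓ₂) → (∃ n : ℤ, v = (n : ℚ) + ℓ₂) →
      ζ u v = ζ v u)
    (hR : ∀ (m : ℤ) (u v : ℚ), (∃ n : ℤ, u = (n : ℚ) + ℓ₂) → (∃ n : ℤ, v = (n : ℚ) + ℓ₂) →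
      ((m : ℂ) * (ℓ₂ : ℂ) - (u : ℂ)) * ζ ((m : ℚ) + u) v
      + ((m : ℂ) * (ℓ₂ : ℂ) - (v : ℂ)) * ζ u ((m : ℚ) + v)
      + ((m : ℂ) * (ℓ₁ : ℂ) + (m : ℂ) + (u : ℂ) + (v : ℂ)) * ζ u v = 0) :
    ∀ u v : ℚ, (∃ n : ℤ, u = (n : ℚ) + ℓ₂) → (∃ n : ℤ, v = (n : ℚ) + ℓ₂) →
      ζ u v = 0 := by
  obtain ⟨k, hk⟩ := hhalf
  have ha : 0 < ℓ₂ := by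
    have : (0:ℚ) ≤ k := Nat.cast_nonneg k
    exact lt_of_le_of_ne (by linarith) (Ne.symm hℓ₂)
  have hb : (0:ℚ) ≤ ℓ₁ := Nat.cast_nonneg ℓ₁
  -- the two diagonal relations
  have hA : ∀ u v : ℚ, (∃ n : ℤ, u = (n : ℚ) + ℓ₂) → (∃ n : ℤ, v = (n : ℚ) + ℓ₂) →
      2 * (((v - u) * ℓ₂ - u : ℚ) : ℂ) * ζ u v
        + (((v - u) * (ℓ₁ + 1) + 2 * u : ℚ) : ℂ) * ζ u u = 0 := by
    intro u v hu hv
    have h1 := hsym u v hu hv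
    obtain ⟨p, hp⟩ := hu
    obtain ⟨q, hq⟩ := hv
    have hm : ((q - p : ℤ) : ℚ) = v - u := by rw [hp, hq]; push_cast; ring
    have hmc : ((q - p : ℤ) : ℂ) = (v : ℂ) - u := by exact_mod_cast congrArg (Rat.cast : ℚ → ℂ) hm
    have h := hR (q - p) u u ⟨p, hp⟩ ⟨p, hp⟩
    rw [hm, hmc, sub_add_cancel, ← h1] at h
    push_cast
    linear_combination h
  have hP : ∀ u v : ℚ, (∃ n : ℤ, u = (n : ℚ) + ℓ₂) → (∃ n : ℤ, v = (n : ℚ) + ℓ₂) →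
      ((((v - u) * (ℓ₁ + 1) + 2 * u) * ((u - v) * ℓ₂ - v) : ℚ) : ℂ) * ζ u u =
      ((((u - v) * (ℓ₁ + 1) + 2 * v) * ((v - u) * ℓ₂ - u) : ℚ) : ℂ) * ζ v v := by
    intro u v hu hv
    have h1 := hA u v hu hv
    have h2 := hA v u hv hu
    rw [hsym v u hv hu] at h2
    push_cast at h1 h2 ⊢
    linear_combination (((u:ℂ) - v) * ℓ₂ - v) * h1 - (((v:ℂ) - u) * ℓ₂ - u) * h2
  have hmem : ∀ j : ℤ, ∃ n : ℤ, ℓ₂ * (2 * j + 1) = (n : ℚ) + ℓ₂ := by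
    intro j
    refine ⟨k * j, ?_⟩
    push_cast
    rw [← hk]; ring
  have hz : ∀ j : ℤ, ζ (ℓ₂ * (2 * j + 1)) (ℓ₂ * (2 * j + 1)) = 0 := by
    intro j
    have hm2 : ∃ n : ℤ, (ℓ₂ + 1) * (2 * j + 1) = (n : ℚ) + ℓ₂ := by
      obtain ⟨n, hn⟩ := hmem j
      refine ⟨n + (2 * j + 1), ?_⟩
      push_cast
      linear_combination hn
    have h := hP _ _ (hmem j) hm2
    have ht : (2 * j + 1 : ℚ) ≠ 0 := by
      have : (2 * j + 1 : ℤ) ≠ 0 := by omega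
      exact_mod_cast this
    set t : ℚ := 2 * j + 1 with htdef
    have e1 : (((ℓ₂ + 1) * t - ℓ₂ * t) * (ℓ₁ + 1) + 2 * (ℓ₂ * t)) *
        ((ℓ₂ * t - (ℓ₂ + 1) * t) * ℓ₂ - (ℓ₂ + 1) * t)
        = -(t ^ 2 * (ℓ₁ + 1 + 2 * ℓ₂) * (2 * ℓ₂ + 1)) := by ring
    have e2 : ((ℓ₂ * t - (ℓ₂ + 1) * t) * (ℓ₁ + 1) + 2 * ((ℓ₂ + 1) * t)) *
        (((ℓ₂ + 1) * t - ℓ₂ * t) * ℓ₂ - ℓ₂ * t) = 0 := by ring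
    rw [e1, e2, Rat.cast_zero, zero_mul] at h
    refine (mul_eq_zero.mp h).resolve_left ?_
    have : t ^ 2 * (ℓ₁ + 1 + 2 * ℓ₂) * (2 * ℓ₂ + 1) ≠ 0 := by positivity
    exact Rat.cast_ne_zero.mpr (neg_ne_zero.mpr this)
  have hd : ∀ u : ℚ, (∃ n : ℤ, u = (n : ℚ) + ℓ₂) → ζ u u = 0 := by
    intro u hu
    by_contra hne
    have H : ∀ j : ℤ, (ℓ₂ * (2 * j + 1) - u) * (ℓ₁ + 1) + 2 * u = 0 ∨
        (u - ℓ₂ * (2 * j + 1)) * ℓ₂ - ℓ₂ * (2 * j + 1) = 0 := by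
      intro j
      have h := hP u _ hu (hmem j)
      rw [hz j, mul_zero] at h
      have h2 := (mul_eq_zero.mp h).resolve_right hne
      exact mul_eq_zero.mp (Rat.cast_eq_zero.mp h2)
    have hx : 0 < ℓ₂ * (ℓ₁ + 1) := by positivity
    have hy : 0 < ℓ₂ * (ℓ₂ + 1) := by positivity
    have h0 := H 0
    have h1 := H 1
    have h2 := H 2
    push_cast at h0 h1 h2
    rcases h0 with h0 | h0 <;> rcases h1 with h1 | h1 <;> rcases h2 with h2 | h2 <;> nlinarith
  intro u v hu hv
  have h1 := hA u v hu hv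
  have h2 := hA v u hv hu
  rw [hsym v u hv hu, hd v hv] at h2
  rw [hd u hu] at h1
  by_contra hne
  simp only [mul_zero, add_zero] at h1 h2
  have h1' := Rat.cast_eq_zero.mp ((mul_eq_zero.mp ((mul_eq_zero.mp h1).resolve_right hne)).resolve_left two_ne_zero)
  have h2' := Rat.cast_eq_zero.mp ((mul_eq_zero.mp ((mul_eq_zero.mp h2).resolve_right hne)).resolve_left two_ne_zero)
  have h3 : (v - u) * (2 * ℓ₂ + 1) = 0 := by linear_combination h1' - h2'
  have h4 : v - u = 0 := (mul_eq_zero.mp h3).resolve_right (by positivity)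
  have h5 : v = u := by linarith
  subst h5
  exact hne (hd v hv)
end

section
/- Let ℓ₂ = 0 and let ℓ₁ be a nonnegative integer with ℓ₁ ≠ 0 and ℓ₁ ≠ 1. If ζ : ℤ×ℤ → ℂ is symmetric and satisfies relation (R), i.e. −u·ζ(m+u, v) − v·ζ(u, m+v) + (mℓ₁ + m + u + v)·ζ(u, v) = 0 for all m, u, v ∈ ℤ, then ζ(u, v) = 0 for all u, v ∈ ℤ. -/
/-- Let `ℓ₂ = 0` and let `ℓ₁` be a nonnegative integer with `ℓ₁ ≠ 0` and
`ℓ₁ ≠ 1`. If `ζ : ℤ×ℤ → ℂ` is symmetric and satisfies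
`−u·ζ(m+u, v) − v·ζ(u, m+v) + (mℓ₁ + m + u + v)·ζ(u, v) = 0` for all `m, u, v ∈ ℤ`,
then `ζ(u, v) = 0` for all `u, v ∈ ℤ`. -/
theorem zeta_sym_vanishes_ell1_generic (ℓ₁ : ℕ) (hℓ0 : ℓ₁ ≠ 0) (hℓ1 : ℓ₁ ≠ 1)
    (ζ : ℤ → ℤ → ℂ)
    (hsym : ∀ u v : ℤ, ζ u v = ζ v u)
    (hR : ∀ m u v : ℤ,
      -(u : ℂ) * ζ (m + u) v - (v : ℂ) * ζ u (m + v)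
      + ((m : ℂ) * (ℓ₁ : ℂ) + (m : ℂ) + (u : ℂ) + (v : ℂ)) * ζ u v = 0) :
    ∀ u v : ℤ, ζ u v = 0 := by
  have hl0 : (ℓ₁ : ℂ) ≠ 0 := by exact_mod_cast hℓ0
  have hl1 : (ℓ₁ : ℂ) - 1 ≠ 0 := by
    intro h
    apply hℓ1
    have h2 : (ℓ₁ : ℂ) = 1 := by linear_combination h
    exact_mod_cast h2
  have h00 : ζ 0 0 = 0 := by
    have h := hR 1 0 0
    have hp : (ℓ₁ : ℂ) + 1 ≠ 0 := by exact_mod_cast Nat.succ_ne_zero ℓ₁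
    have h3 : ((ℓ₁ : ℂ) + 1) * ζ 0 0 = 0 := by
      push_cast at h
      linear_combination h
    exact (mul_eq_zero.mp h3).resolve_left hp
  have hu0 : ∀ u : ℤ, ζ u 0 = 0 := by
    intro u
    by_cases hu : u = 0
    · rw [hu, h00]
    have huc : (u : ℂ) ≠ 0 := by exact_mod_cast hu
    have h := hR (-u) u 0
    rw [neg_add_cancel, h00] at h
    push_cast at h
    have h3 : ((u : ℂ) * ℓ₁) * ζ u 0 = 0 := by linear_combination -h
    exact (mul_eq_zero.mp h3).resolve_left (mul_ne_zero huc hl0)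
  intro u v
  by_cases hu : u = 0
  · rw [hu, hsym, hu0]
  have huc : (u : ℂ) ≠ 0 := by exact_mod_cast hu
  have huu : ζ u u = 0 := by
    have h := hR (-u) u u
    rw [neg_add_cancel, hsym 0 u, hu0] at h
    push_cast at h
    have h3 : ((u : ℂ) * (ℓ₁ - 1)) * ζ u u = 0 := by linear_combination -h
    exact (mul_eq_zero.mp h3).resolve_left (mul_ne_zero huc hl1)
  have h := hR (v - u) u u
  rw [sub_add_cancel, hsym v u, huu] at h
  have h3 : (u : ℂ) * ζ u v = 0 := by linear_combination (-1/2) * h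
  exact (mul_eq_zero.mp h3).resolve_left huc
end

section
/- Let ℓ₁ = 1 and ℓ₂ = 0. If ζ : ℤ×ℤ → ℂ is symmetric and satisfies relation (R), i.e. −u·ζ(m+u, v) − v·ζ(u, m+v) + (2m + u + v)·ζ(u, v) = 0 for all m, u, v ∈ ℤ, then ζ(u, v) = u·v·ζ(1, 1) for all u, v ∈ ℤ. -/
/-- Let `ℓ₁ = 1` and `ℓ₂ = 0`. If `ζ : ℤ×ℤ → ℂ` is symmetric and
satisfies `−u·ζ(m+u, v) − v·ζ(u, m+v) + (2m + u + v)·ζ(u, v) = 0` for all `m, u, v ∈ ℤ`,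
then `ζ(u, v) = u·v·ζ(1, 1)` for all `u, v ∈ ℤ`. -/
theorem zeta_sym_ell_one_zero (ζ : ℤ → ℤ → ℂ)
    (hsym : ∀ u v : ℤ, ζ u v = ζ v u)
    (hR : ∀ m u v : ℤ,
      -(u : ℂ) * ζ (m + u) v - (v : ℂ) * ζ u (m + v)
      + (2 * (m : ℂ) + (u : ℂ) + (v : ℂ)) * ζ u v = 0) :
    ∀ u v : ℤ, ζ u v = (u : ℂ) * (v : ℂ) * ζ 1 1 := by
  have h00 : ζ 0 0 = 0 := by
    have h := hR 1 0 0
    simpa using h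
  have h0 : ∀ v : ℤ, ζ 0 v = 0 := by
    intro v
    by_cases hv : v = 0
    · rw [hv, h00]
    have hv' : (v : ℂ) ≠ 0 := by exact_mod_cast hv
    have h := hR (-v) 0 v
    rw [neg_add_cancel, h00] at h
    push_cast at h
    apply mul_left_cancel₀ hv'
    linear_combination -h
  have hd : ∀ w u : ℤ, (u : ℂ) * ζ w u = (w : ℂ) * ζ u u := by
    intro w u
    have h := hR (w - u) u u
    rw [sub_add_cancel, hsym u w] at h
    push_cast at h
    linear_combination -h / 2
  intro u v
  by_cases hv : v = 0
  · rw [hv, hsym, h0]; simp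
  have hv' : (v : ℂ) ≠ 0 := by exact_mod_cast hv
  have h1 := hd v 1
  have h2 := hd 1 v
  have h3 := hd u v
  rw [hsym 1 v] at h2
  push_cast at h1 h2
  apply mul_left_cancel₀ hv'
  linear_combination h3 - (u : ℂ) * h2 + (u : ℂ) * v * h1
end

section
/- Let ℓ₁ = 0 and ℓ₂ = 0. If ζ : ℤ×ℤ → ℂ is symmetric and satisfies relation (R), i.e. −u·ζ(m+u, v) − v·ζ(u, m+v) + (m + u + v)·ζ(u, v) = 0 for all m, u, v ∈ ℤ, then ζ(u, v) = (u + v)·ζ(1, 0) for all u, v ∈ ℤ. -/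
/-- Let `ℓ₁ = 0` and `ℓ₂ = 0`. If `ζ : ℤ×ℤ → ℂ` is symmetric and
satisfies `−u·ζ(m+u, v) − v·ζ(u, m+v) + (m + u + v)·ζ(u, v) = 0` for all `m, u, v ∈ ℤ`,
then `ζ(u, v) = (u + v)·ζ(1, 0)` for all `u, v ∈ ℤ`. -/
theorem zeta_sym_ell_zero_zero (ζ : ℤ → ℤ → ℂ)
    (hsym : ∀ u v : ℤ, ζ u v = ζ v u)
    (hR : ∀ m u v : ℤ,
      -(u : ℂ) * ζ (m + u) v - (v : ℂ) * ζ u (m + v)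
      + ((m : ℂ) + (u : ℂ) + (v : ℂ)) * ζ u v = 0) :
    ∀ u v : ℤ, ζ u v = ((u : ℂ) + (v : ℂ)) * ζ 1 0 := by
  have h0 : ∀ n : ℤ, ζ n 0 = n * ζ 1 0 := by
    intro n
    have h := hR (n - 1) 1 0
    simp at h
    linear_combination -h
  have hstep : ∀ v : ℤ, v ≠ 0 → ζ 1 v = ζ 1 (v - 1) + ζ 1 0 := by
    intro v hv
    have h := hR (-1) 1 v
    have e : (-1 : ℤ) + v = v - 1 := by ring
    have e2 : (-1 : ℤ) + 1 = 0 := by ring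
    rw [e, e2, hsym 0 v, h0 v] at h
    have hv' : (v : ℂ) ≠ 0 := by exact_mod_cast hv
    apply mul_left_cancel₀ hv'
    push_cast at h
    linear_combination h
  have hm1 : ζ 1 (-1) = 0 := by
    have a := hstep (-1) (by norm_num)
    have b := hstep (-2) (by norm_num)
    have c := hR 1 (-1) (-1)
    have d := hR (-2) 1 (-1)
    have e := h0 (-1)
    have f := hsym 0 (-1)
    norm_num at a b c d e f
    rw [f, e] at c
    linear_combination (-1) * d + c - a - b
  have h1 : ∀ v : ℤ, ζ 1 v = (1 + (v : ℂ)) * ζ 1 0 := by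
    intro v
    induction v using Int.induction_on with
    | zero => simp
    | succ n ih =>
      have h := hstep (n + 1) (by omega)
      rw [add_sub_cancel_right, ih] at h
      rw [h]; push_cast; ring
    | pred n ih =>
      by_cases hn : n = 0
      · subst hn; simp [hm1]
      · have h := hstep (-n) (by omega)
        rw [ih] at h
        push_cast at h ⊢
        linear_combination -h
  intro u v
  have h := hR (u - 1) 1 v
  rw [h1 (u - 1 + v), h1 v, sub_add_cancel] at h
  push_cast at h
  linear_combination -h
end

section
/- Let ℓ be a nonnegative integer. Suppose h : ℤ×ℤ → ℂ is symmetric (h(r,s) = h(s,r)) and satisfies both the cyclic identity h(r,s) + h(s,−r−s) + h(−r−s,r) = 0 for all r, s ∈ ℤ and the recurrence (mℓ − r)·h(m+r, s) + (mℓ − s)·h(r, m+s) + (mℓ + m + r + s)·h(r, s) = 0 for all m, r, s ∈ ℤ. Then: if ℓ ≠ 0, h(r,s) = 0 for all r, s; and if ℓ = 0, h(r,s) = (r + s)·h(1, 0) for all r, s. Equivalently, h(r,s) = δ_{ℓ,0}·(r+s)·c for some constant c ∈ ℂ. -/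
/-- Let `ℓ` be a nonnegative integer and `h : ℤ×ℤ → ℂ` a symmetric
function satisfying the cyclic identity `h(r,s) + h(s,−r−s) + h(−r−s,r) = 0` and the
recurrence `(mℓ − r)h(m+r, s) + (mℓ − s)h(r, m+s) + (mℓ + m + r + s)h(r, s) = 0`.
Then `h = 0` if `ℓ ≠ 0`, and `h(r,s) = (r+s)·h(1,0)` if `ℓ = 0`. -/
theorem h_extension_classification (ℓ : ℕ) (h : ℤ → ℤ → ℂ)
    (hsym : ∀ r s : ℤ, h r s = h s r)
    (hcyc : ∀ r s : ℤ, h r s + h s (-r - s) + h (-r - s) r = 0)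
    (hrec : ∀ m r s : ℤ,
      ((m : ℂ) * (ℓ : ℂ) - (r : ℂ)) * h (m + r) s
      + ((m : ℂ) * (ℓ : ℂ) - (s : ℂ)) * h r (m + s)
      + ((m : ℂ) * (ℓ : ℂ) + (m : ℂ) + (r : ℂ) + (s : ℂ)) * h r s = 0) :
    (ℓ ≠ 0 → ∀ r s : ℤ, h r s = 0)
    ∧ (ℓ = 0 → ∀ r s : ℤ, h r s = ((r : ℂ) + (s : ℂ)) * h 1 0) := by
  constructor
  · intro hl
    have hl1 : (1 : ℤ) ≤ ℓ := by omega
    -- row propagation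
    have Z : ∀ m r : ℤ, m * ℓ ≠ r → (∀ s, h r s = 0) → ∀ s, h (m + r) s = 0 := by
      intro m r hne hz s
      have e := hrec m r s
      rw [hz, hz] at e
      have hne' : (m : ℂ) * (ℓ : ℂ) - (r : ℂ) ≠ 0 := by
        intro hh
        apply hne
        have : (m : ℂ) * (ℓ : ℂ) = (r : ℂ) := by linear_combination hh
        exact_mod_cast this
      have : ((m : ℂ) * (ℓ : ℂ) - (r : ℂ)) * h (m + r) s = 0 := by linear_combination e
      exact (mul_eq_zero.mp this).resolve_left hne'
    -- zeros of row `m * ℓ`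
    have zr : ∀ m : ℤ, m ≠ 0 → ∀ k : ℕ, k ≤ 3 * ℓ → h (m * ℓ) (m * (ℓ - k)) = 0 := by
      intro m hm k
      have hmC : (m : ℂ) ≠ 0 := by exact_mod_cast hm
      induction k with
      | zero =>
        intro _
        have e := hrec m (m * ℓ) (m * ℓ)
        push_cast at e
        have e2 : ((m : ℂ) * (3 * ℓ + 1)) * h (m * ℓ) (m * ℓ) = 0 := by
          linear_combination e
        have h3 : (3 * (ℓ : ℂ) + 1) ≠ 0 := by exact_mod_cast (by omega : 3 * ℓ + 1 ≠ 0)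
        simpa using (mul_eq_zero.mp e2).resolve_left (mul_ne_zero hmC h3)
      | succ k ih =>
        intro hk
        have i := ih (by omega)
        have e := hrec m (m * ℓ) (m * (ℓ - (k + 1 : ℕ)))
        rw [show m + m * ((ℓ : ℤ) - ((k + 1 : ℕ) : ℤ)) = m * (ℓ - k) by push_cast; ring, i] at e
        have h3 : (3 * (ℓ : ℂ) - k) ≠ 0 := by
          intro hh
          have : (3 * (ℓ : ℂ)) = k := by linear_combination hh
          have : 3 * ℓ = k := by exact_mod_cast this
          omega
        have e2 : ((m : ℂ) * (3 * ℓ - k)) * h (m * ℓ) (m * (ℓ - (k + 1 : ℕ))) = 0 := by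
          generalize h (m * ℓ) (m * (ℓ - (k + 1 : ℕ))) = x at e ⊢
          push_cast at e
          linear_combination e
        exact (mul_eq_zero.mp e2).resolve_left (mul_ne_zero hmC h3)
    -- row ℓ
    have row : ∀ s : ℤ, ((ℓ : ℂ) - s) * h ℓ (s + 1) + (2 * (ℓ : ℂ) + 1 + s) * h ℓ s = 0 := by
      intro s
      have e := hrec 1 ℓ s
      rw [add_comm 1 s] at e
      push_cast at e
      linear_combination e
    have up : ∀ s : ℤ, s ≠ ℓ → h ℓ s = 0 → h ℓ (s + 1) = 0 := by
      intro s hs h0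
      have e := row s
      rw [h0, mul_zero, add_zero] at e
      refine (mul_eq_zero.mp e).resolve_left fun hh => hs ?_
      have : (s : ℂ) = (ℓ : ℂ) := by linear_combination -hh
      exact_mod_cast this
    have down : ∀ s : ℤ, s ≠ -2 * ℓ - 1 → h ℓ (s + 1) = 0 → h ℓ s = 0 := by
      intro s hs h0
      have e := row s
      rw [h0, mul_zero, zero_add] at e
      refine (mul_eq_zero.mp e).resolve_left fun hh => hs ?_
      have : (s : ℂ) = -2 * (ℓ : ℂ) - 1 := by linear_combination hh
      exact_mod_cast this
    have mid : ∀ s : ℤ, -2 * ℓ ≤ s → s ≤ ℓ → h ℓ s = 0 := by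
      intro s h1 h2
      have := zr 1 one_ne_zero (ℓ - s).toNat (by omega)
      rw [Int.toNat_of_nonneg (by omega)] at this
      simpa using this
    have pts : (∃ s0 : ℤ, ℓ < s0 ∧ h ℓ s0 = 0) ∧ (∃ s1 : ℤ, s1 < -2 * ℓ ∧ h ℓ s1 = 0) := by
      rcases (by omega : ℓ = 1 ∨ 2 ≤ ℓ) with h1 | h2
      · subst h1
        constructor
        · refine ⟨2, by norm_num, ?_⟩
          have a1 := hrec (-1) 1 2
          have a2 := zr 2 (by norm_num) 1 (by norm_num)
          have a3 := mid 1 (by norm_num) (by norm_num)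
          norm_num at a1 a2 a3
          rw [hsym 0 2, a2, a3] at a1
          linear_combination a1
        · refine ⟨-3, by norm_num, ?_⟩
          have a1 := hrec (-1) 1 (-2)
          have a2 := zr (-2) (by norm_num) 1 (by norm_num)
          have a3 := mid (-2) (by norm_num) (by norm_num)
          norm_num at a1 a2 a3
          rw [hsym 0 (-2), a2, a3] at a1
          linear_combination a1
      · have b1 := zr ℓ (by omega) (ℓ - 1) (by omega)
        rw [show (ℓ : ℤ) * (ℓ - ((ℓ - 1 : ℕ) : ℤ)) = ℓ by
          push_cast [Nat.cast_sub (by omega : 1 ≤ ℓ)]; ring] at b1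
        have b2 := zr ℓ (by omega) (2 * ℓ + 1) (by omega)
        rw [show (ℓ : ℤ) * (ℓ - ((2 * ℓ + 1 : ℕ) : ℤ)) = -ℓ - ℓ * ℓ by
          push_cast; ring] at b2
        have h2' : (2 : ℤ) ≤ ℓ := by omega
        refine ⟨⟨ℓ * ℓ, by nlinarith, by rw [hsym]; exact b1⟩, ⟨-ℓ - ℓ * ℓ, by nlinarith, ?_⟩⟩
        have c := hcyc ℓ (-ℓ - ℓ * ℓ)
        rw [show -(ℓ : ℤ) - (-ℓ - ℓ * ℓ) = ℓ * ℓ by ring, b1, hsym (-ℓ - ℓ * ℓ), b2] at c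
        linear_combination c
    obtain ⟨⟨s0, hs0, z0⟩, ⟨s1, hs1, z1⟩⟩ := pts
    have R : ∀ s, h ℓ s = 0 := by
      intro s
      rcases (by omega : s < -2 * ℓ ∨ (-2 * ℓ ≤ s ∧ s ≤ ℓ) ∨ ℓ < s) with c | ⟨c, d⟩ | c
      · rcases le_total s s1 with d | d
        · induction s, d using Int.le_induction_down with
          | base => exact z1
          | pred n hn ih => exact down _ (by omega) (by simpa using ih (by omega))
        · induction s, d using Int.le_induction with
          | base => exact z1
          | succ n hn ih => exact up _ (by omega) (ih (by omega))
      · exact mid s c d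
      · rcases le_total s s0 with d | d
        · induction s, d using Int.le_induction_down with
          | base => exact z0
          | pred n hn ih => exact down _ (by omega) (by simpa using ih (by omega))
        · induction s, d using Int.le_induction with
          | base => exact z0
          | succ n hn ih => exact up _ (by omega) (ih (by omega))
    have M : ∀ r : ℤ, r ≤ ℓ → -ℓ ≤ r → ∀ s, h r s = 0 := by
      intro r hr
      induction r, hr using Int.le_induction_down with
      | base => exact fun _ => R
      | pred n hn ih =>
        intro hh
        have := Z (-1) n (by omega) (ih (by omega))
        rwa [show -1 + n = n - 1 by ring] at this
    have U : ∀ r : ℤ, (ℓ : ℤ) + 1 ≤ r → ∀ s, h r s = 0 := by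
      intro r hr
      induction r, hr using Int.le_induction with
      | base =>
        have := Z 2 (ℓ - 1) (by omega) (M _ (by omega) (by omega))
        rwa [show 2 + ((ℓ : ℤ) - 1) = ℓ + 1 by ring] at this
      | succ n hn ih =>
        have := Z 1 n (by omega) ih
        rwa [add_comm] at this
    have D : ∀ r : ℤ, r ≤ -(ℓ : ℤ) - 1 → ∀ s, h r s = 0 := by
      intro r hr
      induction r, hr using Int.le_induction_down with
      | base =>
        have := Z (-2) (-ℓ + 1) (by omega) (M _ (by omega) (by omega))
        rwa [show -2 + (-(ℓ : ℤ) + 1) = -ℓ - 1 by ring] at this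
      | pred n hn ih =>
        have := Z (-1) n (by omega) ih
        rwa [show -1 + n = n - 1 by ring] at this
    intro r
    rcases (by omega : r ≤ -(ℓ : ℤ) - 1 ∨ (r ≤ ℓ ∧ -(ℓ : ℤ) ≤ r) ∨ (ℓ : ℤ) + 1 ≤ r) with c | c | c
    · exact D r c
    · exact M r c.1 c.2
    · exact U r c
  · intro hl
    subst hl
    have z : ∀ n : ℤ, h n 0 = n * h 1 0 := by
      intro n
      have e := hrec (n - 1) 1 0
      rw [show n - 1 + 1 = n by ring] at e
      push_cast at e
      linear_combination -e
    obtain ⟨g, hg⟩ : ∃ g : ℤ → ℤ → ℂ, ∀ r s, g r s = h r s - ((r : ℂ) + s) * h 1 0 :=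
      ⟨_, fun _ _ => rfl⟩
    have gsym : ∀ r s, g r s = g s r := by
      intro r s
      rw [hg, hg, hsym r s]; ring
    have g0 : ∀ n, g n 0 = 0 := by
      intro n
      rw [hg, z]; push_cast; ring
    have gneg : ∀ n, g n (-n) = 0 := by
      intro n
      have e := hcyc n (-n)
      rw [show -n - -n = 0 by ring, hsym 0 n, z (-n), z n] at e
      rw [hg]
      push_cast at e ⊢
      linear_combination e
    have step : ∀ r s, g r (s - r) = g r s := by
      intro r s
      by_cases hs : s = 0
      · subst hs
        rw [zero_sub, gneg, g0]
      · have e := hrec (-r) r s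
        rw [show -r + r = 0 by ring, show -r + s = s - r by ring, hsym 0 s, z] at e
        have hsC : (s : ℂ) ≠ 0 := by exact_mod_cast hs
        apply mul_left_cancel₀ hsC
        rw [hg, hg]
        push_cast at e ⊢
        linear_combination -e
    have stepk : ∀ r s k : ℤ, g r (s - r * k) = g r s := by
      intro r s k
      induction k using Int.induction_on with
      | zero => simp
      | succ i ih =>
        rw [← ih, ← step r (s - r * i)]; congr 1; ring
      | pred i ih =>
        rw [← ih, ← step r (s - r * (-i - 1))]; congr 1; ring
    have main : ∀ n : ℕ, ∀ r s : ℤ, r.natAbs = n → g r s = 0 := by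
      intro n
      induction n using Nat.strong_induction_on with
      | _ n ih =>
        intro r s hr
        by_cases hr0 : r = 0
        · rw [hr0, gsym, g0]
        · rw [← stepk r s (s / r), gsym]
          have e : s - r * (s / r) = s % r := by
            rw [Int.emod_def]
          rw [e]
          refine ih (s % r).natAbs ?_ _ _ rfl
          have h1 := Int.emod_nonneg s hr0
          have h2 := Int.emod_lt_abs s hr0
          rw [Int.abs_eq_natAbs] at h2
          omega
    intro r s
    have := main _ r s rfl
    rw [hg] at this
    linear_combination this
end

section
/- Let ℓ be a nonnegative integer. Suppose η : ℤ×ℤ → ℂ is antisymmetric (η(u,v) = −η(v,u)) and satisfies both the cyclic identity η(u,v) + η(v,−u−v) + η(−u−v,u) = 0 for all u, v ∈ ℤ and the recurrence (mℓ − u)·η(m+u, v) + (mℓ − v)·η(u, m+v) + (mℓ + m + u + v)·η(u, v) = 0 for all m, u, v ∈ ℤ. Then: if ℓ ≠ 0, η(u,v) = 0 for all u, v; and if ℓ = 0, η(u,v) = (u − v)·η(1, 0) for all u, v. Equivalently, η(u,v) = δ_{ℓ,0}·(u−v)·c for some constant c ∈ ℂ. -/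
/-- Let `ℓ` be a nonnegative integer and `η : ℤ×ℤ → ℂ` an antisymmetric
function satisfying the cyclic identity `η(u,v) + η(v,−u−v) + η(−u−v,u) = 0` and the
recurrence `(mℓ − u)η(m+u, v) + (mℓ − v)η(u, m+v) + (mℓ + m + u + v)η(u, v) = 0`.
Then `η = 0` if `ℓ ≠ 0`, and `η(u,v) = (u−v)·η(1,0)` if `ℓ = 0`. -/
theorem eta_extension_classification (ℓ : ℕ) (η : ℤ → ℤ → ℂ)
    (hanti : ∀ u v : ℤ, η u v = - η v u)
    (hcyc : ∀ u v : ℤ, η u v + η v (-u - v) + η (-u - v) u = 0)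
    (hrec : ∀ m u v : ℤ,
      ((m : ℂ) * (ℓ : ℂ) - (u : ℂ)) * η (m + u) v
      + ((m : ℂ) * (ℓ : ℂ) - (v : ℂ)) * η u (m + v)
      + ((m : ℂ) * (ℓ : ℂ) + (m : ℂ) + (u : ℂ) + (v : ℂ)) * η u v = 0) :
    (ℓ ≠ 0 → ∀ u v : ℤ, η u v = 0)
    ∧ (ℓ = 0 → ∀ u v : ℤ, η u v = ((u : ℂ) - (v : ℂ)) * η 1 0) := by
  have h00 : η 0 0 = 0 := by
    have := hanti 0 0
    linear_combination this / 2
  constructor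
  · intro hl
    have hl0 : (ℓ : ℂ) ≠ 0 := by exact_mod_cast hl
    have key : ∀ m u : ℤ, ((u : ℂ)^2 + (m : ℂ)^2 - 2 * m * u * ℓ) * η (m + u) 0
        = u * (m * ℓ + m + u) * η u 0 + m * (u * ℓ + m + u) * η m 0 := by
      intro m u
      have e1 := hrec m u 0
      have e2 := hrec u m 0
      have e3 := hanti u m
      rw [add_zero] at e1 e2
      rw [add_comm u m] at e2
      push_cast at e1 e2
      linear_combination (-(u : ℂ)) * e1 - (m : ℂ) * e2 + (m : ℂ) * u * ℓ * e3
    have ha : ∀ u : ℤ, η u 0 = 0 := by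
      intro u
      by_cases hu : u = 0
      · rw [hu, h00]
      have hu0 : (u : ℂ) ≠ 0 := by exact_mod_cast hu
      have hu2 : (u : ℂ)^2 ≠ 0 := pow_ne_zero 2 hu0
      have hodd : η (-u) 0 = - η u 0 := by
        have k := key (-u) u
        rw [neg_add_cancel, h00] at k
        push_cast at k
        apply mul_left_cancel₀ (mul_ne_zero hu2 hl0)
        linear_combination k
      have k1 : (1 - (ℓ : ℂ)) * η (2 * u) 0 = (ℓ + 2) * η u 0 := by
        have k := key u u
        rw [show u + u = 2 * u by ring] at k
        apply mul_left_cancel₀ hu2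
        linear_combination k / 2
      have k2 : (5 - 4 * (ℓ : ℂ)) * η (3 * u) 0
          = 2 * (ℓ + 3) * η (2 * u) 0 + (2 * ℓ + 3) * η u 0 := by
        have k := key u (2 * u)
        rw [show u + 2 * u = 3 * u by ring] at k
        push_cast at k
        apply mul_left_cancel₀ hu2
        linear_combination k
      have k3 : (10 + 6 * (ℓ : ℂ)) * η (2 * u) 0
          = 3 * (2 - ℓ) * η (3 * u) 0 + (3 * ℓ + 2) * η u 0 := by
        have k := key (-u) (3 * u)
        rw [show -u + 3 * u = 2 * u by ring, hodd] at k
        push_cast at k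
        apply mul_left_cancel₀ hu2
        linear_combination k
      have h1 : (3 * (ℓ : ℂ) - 2) ≠ 0 := by
        intro h
        have h' : (3 * (ℓ : ℂ)) = 2 := by linear_combination h
        have h'' : 3 * ℓ = 2 := by exact_mod_cast h'
        omega
      have h2 : ((ℓ : ℂ) + 1) ≠ 0 := by exact_mod_cast Nat.succ_ne_zero ℓ
      have h3 : (12 : ℂ) * ℓ * (3 * ℓ - 2) * (ℓ + 1) ≠ 0 :=
        mul_ne_zero (mul_ne_zero (mul_ne_zero (by norm_num) hl0) h1) h2
      apply mul_left_cancel₀ h3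
      linear_combination (-(1 - (ℓ : ℂ)) * (5 - 4 * ℓ)) * k3
        - (1 - (ℓ : ℂ)) * 3 * (2 - ℓ) * k2
        + ((5 - 4 * (ℓ : ℂ)) * (10 + 6 * ℓ) - 6 * (2 - ℓ) * (ℓ + 3)) * k1
    intro u m
    by_cases hm : m = 0
    · rw [hm, ha]
    have hm0 : (m : ℂ) ≠ 0 := by exact_mod_cast hm
    have e1 := hrec m u 0
    rw [add_zero, ha, ha] at e1
    push_cast at e1
    apply mul_left_cancel₀ (mul_ne_zero hm0 hl0)
    linear_combination e1
  · intro hl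
    subst hl
    have ha : ∀ u : ℤ, η u 0 = u * η 1 0 := by
      intro u
      have e := hrec (u - 1) 1 0
      rw [sub_add_cancel] at e
      push_cast at e
      linear_combination -e
    have hstep : ∀ v : ℤ, v ≠ 0 → η 1 v - η 1 (v - 1) = - η 1 0 := by
      intro v hv
      have hv0 : (v : ℂ) ≠ 0 := by exact_mod_cast hv
      have e := hrec (-1) 1 v
      have e2 := hanti 0 v
      have e3 := ha v
      rw [neg_add_cancel, show -1 + v = v - 1 by ring, e2, e3] at e
      push_cast at e
      apply mul_left_cancel₀ hv0
      linear_combination e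
    have hneg : η 1 (-1) = 2 * η 1 0 := by
      have c := hcyc 1 0
      have e2 := hanti 0 (-1)
      have e3 := ha (-1)
      have e4 := hanti (-1) 1
      norm_num at c e3
      linear_combination -c + e2 - e3 + e4
    have h1 : ∀ v : ℤ, η 1 v = (1 - (v : ℂ)) * η 1 0 := by
      have hp : ∀ n : ℕ, η 1 (n : ℤ) = (1 - (n : ℂ)) * η 1 0 := by
        intro n
        induction n with
        | zero => simp
        | succ k ih =>
          have s := hstep ((k : ℤ) + 1) (by omega)
          rw [add_sub_cancel_right, ih] at s
          push_cast
          linear_combination s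
      have hn : ∀ n : ℕ, η 1 (-1 - (n : ℤ)) = (2 + (n : ℂ)) * η 1 0 := by
        intro n
        induction n with
        | zero => simpa using hneg
        | succ k ih =>
          have s := hstep (-1 - (k : ℤ)) (by omega)
          rw [ih, show -1 - (k : ℤ) - 1 = -1 - ((k : ℤ) + 1) by ring] at s
          push_cast
          linear_combination -s
      intro v
      by_cases hv : 0 ≤ v
      · obtain ⟨n, rfl⟩ := Int.eq_ofNat_of_zero_le hv
        simpa using hp n
      · obtain ⟨n, hn'⟩ := Int.eq_ofNat_of_zero_le (show 0 ≤ -1 - v by omega)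
        obtain rfl : v = -1 - (n : ℤ) := by omega
        rw [hn]
        push_cast
        ring
    intro u v
    have e := hrec (u - 1) 1 v
    rw [sub_add_cancel, h1, h1 v] at e
    push_cast at e
    linear_combination -e
end
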